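/- The affine cone over the Grassmannian G(2,m) in Plücker coordinates, i.e., the zero set of the Plücker relations in ℂ^{C(m,2)}, has Krull dimension 2(m−2)+1 = 2m−3 for m ≥ 4. -/

import Mathlib

open MvPolynomial

/-- Index set for the Plücker variables `T_{ij}`, `i < j`. -/
abbrev PIdx (n : ℕ) := {p : Fin n × Fin n // p.1 < p.2}

/-- The variable `T_{ij}`. -/
noncomputable def Tv {K : Type*} [CommRing K] {n : ℕ} (i j : Fin n) (h : i < j) :
    MvPolynomial (PIdx n) K := X ⟨(i, j), h⟩

/-- The Plücker relation `P_{ijkl} = T_{ij}T_{kl} - T_{ik}T_{jl} + T_{il}T_{jk}`. -/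
noncomputable def pluck {K : Type*} [CommRing K] {n : ℕ} (i j k l : Fin n)
    (hij : i < j) (hjk : j < k) (hkl : k < l) : MvPolynomial (PIdx n) K :=
  Tv i j hij * Tv k l hkl - Tv i k (hij.trans hjk) * Tv j l (hjk.trans hkl)
    + Tv i l (hij.trans (hjk.trans hkl)) * Tv j k hjk

/-- The set of all Plücker relations. -/
def pluckerSet (K : Type*) [CommRing K] (n : ℕ) : Set (MvPolynomial (PIdx n) K) :=
  {P | ∃ (i j k l : Fin n) (hij : i < j) (hjk : j < k) (hkl : k < l),
    P = pluck i j k l hij hjk hkl}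


/-- An integral ring extension does not raise the Krull dimension. -/
lemma RingHom.IsIntegral.ringKrullDim_le {A B : Type*} [CommRing A] [CommRing B] {f : A →+* B}
    (hf : f.IsIntegral) : ringKrullDim B ≤ ringKrullDim A := by
  algebraize [f]
  refine Order.krullDim_le_of_strictMono (PrimeSpectrum.comap f) fun I J h ↦ ?_
  exact Ideal.IsIntegral.comap_lt_comap (R := A) (I := I.asIdeal) (J := J.asIdeal) h

section HomogeneousParameters

variable {σ ι K : Type*}

lemma MvPolynomial.homogeneousComponent_mul_of_isHomogeneous_one [CommRing K]
    {a : MvPolynomial σ K} (ha : a.IsHomogeneous 1) (b : MvPolynomial σ K) (n : ℕ) :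
    homogeneousComponent (n + 1) (a * b) = a * homogeneousComponent n b := by
  have h (i : ℕ) : homogeneousComponent (n + 1) (a * homogeneousComponent i b) =
      if n = i then a * homogeneousComponent i b else 0 := by
    rw [homogeneousComponent_of_mem (ha.mul (homogeneousComponent_isHomogeneous i b))]
    simp [add_comm 1 i]
  conv_lhs => rw [← sum_homogeneousComponent b, Finset.mul_sum, map_sum]
  simp_rw [h]
  rw [Finset.sum_ite_eq, ite_eq_left_iff]
  intro hn
  rw [homogeneousComponent_eq_zero _ _ (by simpa using hn), mul_zero]

attribute [local instance] MvPolynomial.gradedAlgebra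

/-- If linear forms `θ` cut out the origin on the cone with homogeneous coordinate ring `B`, then
`B` is finite over the polynomial ring in the `θ`. -/
lemma MvPolynomial.finite_comp_aeval_of_X_mem_radical [Finite σ] [Finite ι] [Field K]
    {B : Type*} [CommRing B] {π : MvPolynomial σ K →+* B} (hπ : Function.Surjective π)
    (hJ : (RingHom.ker π).IsHomogeneous (homogeneousSubmodule σ K))
    (θ : ι → MvPolynomial σ K) (hθ : ∀ k, (θ k).IsHomogeneous 1)
    (hX : ∀ s, X s ∈ (RingHom.ker π ⊔ Ideal.span (Set.range θ)).radical) :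
    (π.comp (aeval θ : MvPolynomial ι K →ₐ[K] MvPolynomial σ K).toRingHom).Finite := by
  cases nonempty_fintype ι
  have hI : idealOfVars σ K ≤ (RingHom.ker π ⊔ Ideal.span (Set.range θ)).radical := by
    rw [idealOfVars, Ideal.span_le]
    rintro _ ⟨s, rfl⟩
    exact hX s
  obtain ⟨N, hN⟩ := Ideal.exists_pow_le_of_le_radical_of_fg hI (idealOfVars_fg σ K)
  set f := π.comp (aeval θ : MvPolynomial ι K →ₐ[K] _).toRingHom with hf
  algebraize [f]
  have hsmul (a : MvPolynomial ι K) (u : MvPolynomial σ K) :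
      a • π u = π (aeval θ a * u) := by
    rw [Algebra.smul_def, map_mul]
    rfl
  let M : Submodule (MvPolynomial ι K) B :=
    Submodule.span _ ((fun s ↦ π (monomial s 1)) '' {s | s.degree ≤ N})
  have hlow (u : MvPolynomial σ K) (d : ℕ) (hu : u.IsHomogeneous d) (hd : d ≤ N) : π u ∈ M := by
    rw [u.as_sum, map_sum]
    refine Submodule.sum_mem _ fun s hs ↦ ?_
    have hs' : s.degree = d := (hu.degree_eq_sum_deg_support hs).symm
    have := M.smul_mem (C (coeff s u)) (Submodule.subset_span ⟨s, hs'.trans_le hd, rfl⟩)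
    rwa [hsmul, algHom_C, algebraMap_eq, C_mul_monomial, mul_one] at this
  have key (d : ℕ) (u : MvPolynomial σ K) (hu : u.IsHomogeneous d) : π u ∈ M := by
    induction d generalizing u with
    | zero => exact hlow u 0 hu N.zero_le
    | succ d ih =>
      by_cases hd : d + 1 ≤ N
      · exact hlow u _ hu hd
      have hmem : u ∈ idealOfVars σ K ^ N := by
        rw [mem_pow_idealOfVars_iff]
        intro x hx
        have : x.degree = d + 1 := (hu.degree_eq_sum_deg_support hx).symm
        omega
      obtain ⟨g, hg, h, hh, hgh⟩ := Submodule.mem_sup.mp (hN hmem)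
      obtain ⟨c, rfl⟩ := (Submodule.mem_span_range_iff_exists_fun _).mp hh
      have hu' : u = homogeneousComponent (d + 1) g
          + ∑ k, θ k * homogeneousComponent d (c k) := by
        rw [← homogeneousComponent_eq_self hu, ← hgh, map_add, map_sum]
        congr 1
        refine Finset.sum_congr rfl fun k _ ↦ ?_
        rw [smul_eq_mul, mul_comm, homogeneousComponent_mul_of_isHomogeneous_one (hθ k)]
      have hg' : π (homogeneousComponent (d + 1) g) = 0 := homogeneousComponent_mem_of_mem hJ hg _
      rw [hu', map_add, hg', zero_add, map_sum]
      refine Submodule.sum_mem _ fun k _ ↦ ?_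
      have := M.smul_mem (X k) (ih _ (homogeneousComponent_isHomogeneous d (c k)))
      rwa [hsmul, aeval_X] at this
  refine ⟨(Submodule.fg_def.mpr
    ⟨_, (Finsupp.finite_of_degree_le N).image fun s ↦ π (monomial s 1), ?_⟩)⟩
  refine (eq_top_iff.mpr fun b _ ↦ ?_ : M = ⊤)
  obtain ⟨u, rfl⟩ := hπ b
  rw [← sum_homogeneousComponent u, map_sum]
  exact Submodule.sum_mem _ fun i _ ↦ key i _ (homogeneousComponent_isHomogeneous i u)

end HomogeneousParameters

section Plucker

variable {K : Type*}

attribute [local instance] MvPolynomial.gradedAlgebra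

lemma isHomogeneous_span_pluckerSet [CommRing K] (m : ℕ) :
    (Ideal.span (pluckerSet K m)).IsHomogeneous (homogeneousSubmodule (PIdx m) K) := by
  refine Ideal.homogeneous_span _ _ ?_
  rintro _ ⟨i, j, k, l, hij, hjk, hkl, rfl⟩
  refine ⟨2, (mem_homogeneousSubmodule _ _).2 ?_⟩
  exact (((isHomogeneous_X K _).mul (isHomogeneous_X K _)).sub
    ((isHomogeneous_X K _).mul (isHomogeneous_X K _))).add
    ((isHomogeneous_X K _).mul (isHomogeneous_X K _))

/-- The sum of the Plücker variables `T_{ij}` with `i + j = k + 1` (indices starting at `0`). -/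
noncomputable def antidiagonalForm (K : Type*) [CommRing K] (m : ℕ) (k : Fin (2 * m - 3)) :
    MvPolynomial (PIdx m) K :=
  ∑ p : PIdx m with (p.1.1 : ℕ) + p.1.2 = k + 1, X p

lemma isHomogeneous_antidiagonalForm [CommRing K] (m : ℕ) (k : Fin (2 * m - 3)) :
    (antidiagonalForm K m k).IsHomogeneous 1 :=
  IsHomogeneous.sum _ _ _ fun p _ ↦ isHomogeneous_X K p

lemma X_mem_radical_pluckerSet_sup_antidiagonalForm [CommRing K] {m : ℕ} (p : PIdx m) :
    X p ∈ (Ideal.span (pluckerSet K m) ⊔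
      Ideal.span (Set.range (antidiagonalForm K m))).radical := by
  set I := (Ideal.span (pluckerSet K m) ⊔ Ideal.span (Set.range (antidiagonalForm K m))).radical
    with hI
  have hP {i j k l : Fin m} (hij : i < j) (hjk : j < k) (hkl : k < l) :
      pluck i j k l hij hjk hkl ∈ I :=
    Ideal.le_radical <| Ideal.mem_sup_left <| Ideal.subset_span ⟨i, j, k, l, hij, hjk, hkl, rfl⟩
  induction hn : (p.1.1 : ℕ) + p.1.2 using Nat.strong_induction_on generalizing p with
  | _ n ih =>
  have nested {i k l j : Fin m} (hik : i < k) (hkl : k < l) (hlj : l < j)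
      (hs : (k : ℕ) + l = n) (hs' : (i : ℕ) + j = n) :
      Tv i j (hik.trans (hkl.trans hlj)) * Tv k l hkl ∈ I := by
    have h₁ : Tv i k hik ∈ I := ih (i + k) (by lia) ⟨(i, k), hik⟩ rfl
    have h₂ : Tv i l (hik.trans hkl) ∈ I := ih (i + l) (by lia) ⟨(i, l), hik.trans hkl⟩ rfl
    have h := I.add_mem (I.sub_mem (hP hik hkl hlj) (I.mul_mem_right (Tv l j hlj) h₁))
      (I.mul_mem_right (Tv k j (hkl.trans hlj)) h₂)
    convert h using 1
    rw [pluck]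
    ring
  have hmul (q : PIdx m) (hq : (q.1.1 : ℕ) + q.1.2 = n) (hqp : q ≠ p) : X q * X p ∈ I := by
    obtain ⟨⟨i, j⟩, hij⟩ := p
    obtain ⟨⟨k, l⟩, hkl⟩ := q
    simp only at hn hq hij hkl
    rcases lt_trichotomy i k with h | h | h
    · rw [mul_comm]
      exact nested h hkl (by lia) hq hn
    · exact absurd (by ext <;> simp <;> lia) hqp
    · exact nested h hij (by lia) hn hq
  have hlt := p.2
  have hθ : antidiagonalForm K m ⟨n - 1, by lia⟩ ∈ I :=
    Ideal.le_radical <| Ideal.mem_sup_right <| Ideal.subset_span ⟨_, rfl⟩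
  refine (Ideal.radical_isRadical _) ⟨2, ?_⟩
  rw [← hI]
  have hsum : antidiagonalForm K m ⟨n - 1, by lia⟩ * X p = X p ^ 2 +
      ∑ q ∈ (Finset.univ.filter fun q : PIdx m ↦ (q.1.1 : ℕ) + q.1.2 = n - 1 + 1).erase p, X q * X p := by
    rw [antidiagonalForm, Finset.sum_mul, pow_two]
    refine (Finset.add_sum_erase _ (fun q ↦ X q * X p) ?_).symm
    simp
    lia
  rw [eq_sub_of_add_eq hsum.symm]
  refine I.sub_mem (I.mul_mem_right _ hθ) (I.sum_mem fun q hq ↦ ?_)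
  simp only [Finset.mem_erase, Finset.mem_filter, Finset.mem_univ, true_and] at hq
  exact hmul q (by lia) hq.1

lemma ringKrullDim_pluckerSet_le [Field K] (m : ℕ) :
    ringKrullDim (MvPolynomial (PIdx m) K ⧸ Ideal.span (pluckerSet K m)) ≤
      (2 * m - 3 : ℕ) := by
  have hfin := finite_comp_aeval_of_X_mem_radical
    (π := Ideal.Quotient.mk (Ideal.span (pluckerSet K m))) Ideal.Quotient.mk_surjective
    (by rw [Ideal.mk_ker]; exact isHomogeneous_span_pluckerSet m) (antidiagonalForm K m)
    (isHomogeneous_antidiagonalForm m)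
    (by rw [Ideal.mk_ker]; exact X_mem_radical_pluckerSet_sup_antidiagonalForm)
  refine hfin.to_isIntegral.ringKrullDim_le.trans_eq ?_
  simp [MvPolynomial.ringKrullDim_of_isNoetherianRing]

/-- The parametrization `T_{ij} ↦ a_i b_j - a_j b_i` of the cone over `G(2,m)`, restricted to
`a_i = 0` for `i < s` and `b_j = 0` for `j < t` (a Schubert variety). -/
noncomputable def schubertMap (K : Type*) [CommRing K] (m s t : ℕ) :
    MvPolynomial (PIdx m) K →ₐ[K] MvPolynomial (Fin m ⊕ Fin m) K :=
  let a (i : Fin m) : MvPolynomial (Fin m ⊕ Fin m) K := if (i : ℕ) < s then 0 else X (.inl i)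
  let b (i : Fin m) : MvPolynomial (Fin m ⊕ Fin m) K := if (i : ℕ) < t then 0 else X (.inr i)
  aeval fun p ↦ a p.1.1 * b p.1.2 - a p.1.2 * b p.1.1

lemma span_pluckerSet_le_ker_schubertMap [CommRing K] (m s t : ℕ) :
    Ideal.span (pluckerSet K m) ≤ RingHom.ker (schubertMap K m s t) := by
  rw [Ideal.span_le]
  rintro _ ⟨i, j, k, l, hij, hjk, hkl, rfl⟩
  simp only [SetLike.mem_coe, RingHom.mem_ker, pluck, Tv, schubertMap, map_add, map_sub, map_mul,
    aeval_X]
  ring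

lemma ker_schubertMap_mono [CommRing K] (m : ℕ) {s t s' t' : ℕ} (hs : s ≤ s') (ht : t ≤ t') :
    RingHom.ker (schubertMap K m s t) ≤ RingHom.ker (schubertMap K m s' t') := by
  let r : MvPolynomial (Fin m ⊕ Fin m) K →ₐ[K] MvPolynomial (Fin m ⊕ Fin m) K :=
    aeval (Sum.elim (fun i ↦ if (i : ℕ) < s' then 0 else X (.inl i))
      (fun i ↦ if (i : ℕ) < t' then 0 else X (.inr i)))
  have hr : r.comp (schubertMap K m s t) = schubertMap K m s' t' := by
    have ha (i : Fin m) : r (if (i : ℕ) < s then 0 else X (.inl i)) =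
        if (i : ℕ) < s' then 0 else X (.inl i) := by
      split_ifs <;> simp [r] <;> lia
    have hb (i : Fin m) : r (if (i : ℕ) < t then 0 else X (.inr i)) =
        if (i : ℕ) < t' then 0 else X (.inr i) := by
      split_ifs <;> simp [r] <;> lia
    refine algHom_ext fun p ↦ ?_
    simp only [AlgHom.comp_apply, schubertMap, aeval_X, map_sub, map_mul, ha, hb]
  intro x hx
  rw [RingHom.mem_ker] at hx ⊢
  rw [← hr, AlgHom.comp_apply, hx, map_zero]

lemma ker_schubertMap_lt [CommRing K] [Nontrivial K] {m s t s' t' : ℕ}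
    (hst : s < t) (htm : t < m) (hs : s ≤ s') (ht : t ≤ t') (h : s < s' ∨ t < t') :
    RingHom.ker (schubertMap K m s t) < RingHom.ker (schubertMap K m s' t') := by
  refine SetLike.lt_iff_le_and_exists.2 ⟨ker_schubertMap_mono m hs ht,
    X ⟨(⟨s, hst.trans htm⟩, ⟨t, htm⟩), hst⟩, ?_, ?_⟩
  · rcases h with h | h <;> simp [schubertMap, h, hst.trans_le ht]
  · simp [schubertMap, hst]

lemma le_ringKrullDim_pluckerSet [Field K] {m : ℕ} (hm : 2 ≤ m) :
    (2 * m - 3 : ℕ) ≤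
      ringKrullDim (MvPolynomial (PIdx m) K ⧸ Ideal.span (pluckerSet K m)) := by
  rw [ringKrullDim_quotient]
  let F (n : Fin (2 * m - 3 + 1)) :
      PrimeSpectrum.zeroLocus (Ideal.span (pluckerSet K m) : Set (MvPolynomial (PIdx m) K)) :=
    ⟨⟨RingHom.ker (schubertMap K m (n - (m - 2)) (min (n + 1) (m - 1))), RingHom.ker_isPrime _⟩,
      span_pluckerSet_le_ker_schubertMap m _ _⟩
  have hF : StrictMono F := by
    refine Fin.strictMono_iff_lt_succ.2 fun n ↦ ?_
    have hn := n.2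
    exact ker_schubertMap_lt (by simp; lia) (by simp; lia) (by simp; lia) (by simp)
      (by simp; lia)
  exact Order.LTSeries.length_le_krullDim (LTSeries.mk _ F hF)

end Plucker

/-- The affine cone over the Grassmannian `G(2,m)` in Plücker coordinates has
Krull dimension `2(m-2)+1 = 2m-3` for `m ≥ 4`: the Krull dimension of
`ℂ[T_{ij}]/(Plücker relations)` equals `2m-3`. -/
theorem stmt_14 (m : ℕ) (hm : 4 ≤ m) :
    ringKrullDim (MvPolynomial (PIdx m) ℂ ⧸ Ideal.span (pluckerSet ℂ m)) =
      (2 * m - 3 : ℕ) :=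
  le_antisymm (ringKrullDim_pluckerSet_le m) (le_ringKrullDim_pluckerSet (by lia))
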